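/- Let b ≥ 1/2, T̃ > 0, let y, h : [0,T̃] → (0,∞) be continuous with y(k) < h(k) for all k, and let Ψ, Φ : [0,T̃] → ℝ be continuous. With the Bessel heat kernel q_s(z,ζ,b) = (√(zζ)/s)·(ζ/z)^b·exp(−(z²+ζ²)/(2s))·I_{b−1/2}(zζ/s), fix τ ∈ (0,T̃] and z > 0 such that y(k) < z < h(k) for all k ∈ [0,τ]. Then the double-layer Bessel potential q(τ,z) := ∫_0^τ { Ψ(k)·[∂q_{τ−k}(z,ζ,b)/∂ζ]|_{ζ=y(k)} + Φ(k)·[∂q_{τ−k}(z,ζ,b)/∂ζ]|_{ζ=h(k)} } dk is well defined (both integrands extend continuously by 0 at k = τ), and on the open set of such points it is C¹ in τ and C² in z and satisfies ∂q/∂τ = (1/2)∂²q/∂z² + (b/z)∂q/∂z. -/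

import Mathlib

/-- Modified Bessel function of the first kind,
`I_ν(x) = Σ_{k=0}^∞ (x/2)^{2k+ν}/(k!·Γ(k+ν+1))`. -/
noncomputable def besselI (ν x : ℝ) : ℝ :=
  ∑' k : ℕ, (x / 2) ^ (2 * (k : ℝ) + ν) / ((Nat.factorial k : ℝ) * Real.Gamma ((k : ℝ) + ν + 1))

/-- Bessel heat kernel
`q_s(z,ζ,b) = (√(zζ)/s)·(ζ/z)^b·exp(−(z²+ζ²)/(2s))·I_{b−1/2}(zζ/s)`. -/
noncomputable def besselKernel (b s z ζ : ℝ) : ℝ :=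
  Real.sqrt (z * ζ) / s * (ζ / z) ^ b * Real.exp (-(z ^ 2 + ζ ^ 2) / (2 * s)) *
    besselI (b - 1 / 2) (z * ζ / s)

/-- Entire function `E_ν(w) = Σ w^k/(k! Γ(k+ν+1))`. -/
noncomputable def bE (ν w : ℝ) : ℝ :=
  ∑' k : ℕ, w ^ k / ((Nat.factorial k : ℝ) * Real.Gamma ((k : ℝ) + ν + 1))

lemma bE_gam {ν : ℝ} (hν : 0 ≤ ν) (k : ℕ) :
    Real.Gamma (ν + 1) * (Nat.factorial k : ℝ) ≤ Real.Gamma ((k : ℝ) + ν + 1) := by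
  induction k with
  | zero => simp
  | succ k ih =>
    have h1 : ((k + 1 : ℕ) : ℝ) + ν + 1 = ((k : ℝ) + ν + 1) + 1 := by push_cast; ring
    have h0 : (0 : ℝ) < (k : ℝ) + ν + 1 := by positivity
    rw [h1, Real.Gamma_add_one h0.ne', Nat.factorial_succ]
    push_cast
    have hG : 0 < Real.Gamma (ν + 1) := Real.Gamma_pos_of_pos (by linarith)
    have : (0 : ℝ) ≤ Real.Gamma (ν + 1) * (Nat.factorial k : ℝ) := by positivity
    calc Real.Gamma (ν + 1) * (((k : ℝ) + 1) * (Nat.factorial k : ℝ))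
        = ((k : ℝ) + 1) * (Real.Gamma (ν + 1) * (Nat.factorial k : ℝ)) := by ring
      _ ≤ ((k : ℝ) + ν + 1) * Real.Gamma ((k : ℝ) + ν + 1) := by
        apply mul_le_mul _ ih this h0.le
        linarith

lemma bE_gpos {ν : ℝ} (hν : 0 ≤ ν) (k : ℕ) : 0 < Real.Gamma ((k : ℝ) + ν + 1) :=
  Real.Gamma_pos_of_pos (by positivity)

lemma bE_coef {ν : ℝ} (hν : 0 ≤ ν) (k : ℕ) :
    ((Nat.factorial k : ℝ) * Real.Gamma ((k : ℝ) + ν + 1))⁻¹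
      ≤ (Real.Gamma (ν + 1))⁻¹ * ((Nat.factorial k : ℝ) * (Nat.factorial k : ℝ))⁻¹ := by
  rw [← mul_inv]
  have hG : 0 < Real.Gamma (ν + 1) := Real.Gamma_pos_of_pos (by linarith)
  apply inv_anti₀ (by positivity)
  have := bE_gam hν k
  have h2 : (0 : ℝ) < (Nat.factorial k : ℝ) := by positivity
  nlinarith

lemma bE_term_le {ν : ℝ} (hν : 0 ≤ ν) (w : ℝ) (k : ℕ) :
    ‖w ^ k / ((Nat.factorial k : ℝ) * Real.Gamma ((k : ℝ) + ν + 1))‖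
      ≤ (Real.Gamma (ν + 1))⁻¹ * (|w| ^ k / (Nat.factorial k : ℝ)) := by
  have hG : 0 < Real.Gamma (ν + 1) := Real.Gamma_pos_of_pos (by linarith)
  have hg := bE_gpos hν k
  rw [norm_div, norm_pow, Real.norm_eq_abs, Real.norm_eq_abs, abs_of_pos (by positivity : 0 < (Nat.factorial k : ℝ) * Real.Gamma ((k : ℝ) + ν + 1)), div_eq_mul_inv]
  have h1 : (1 : ℝ) ≤ (Nat.factorial k : ℝ) := by exact_mod_cast Nat.one_le_iff_ne_zero.2 (Nat.factorial_ne_zero k)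
  calc |w| ^ k * ((Nat.factorial k : ℝ) * Real.Gamma ((k : ℝ) + ν + 1))⁻¹
      ≤ |w| ^ k * ((Real.Gamma (ν + 1))⁻¹ * ((Nat.factorial k : ℝ) * (Nat.factorial k : ℝ))⁻¹) := by
        gcongr; exact bE_coef hν k
    _ ≤ |w| ^ k * ((Real.Gamma (ν + 1))⁻¹ * ((Nat.factorial k : ℝ))⁻¹) := by
        gcongr
        nlinarith
    _ = _ := by ring

lemma bE_summable {ν : ℝ} (hν : 0 ≤ ν) (w : ℝ) :
    Summable (fun k : ℕ => w ^ k / ((Nat.factorial k : ℝ) * Real.Gamma ((k : ℝ) + ν + 1))) :=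
  Summable.of_norm_bounded ((Real.summable_pow_div_factorial |w|).mul_left _) (bE_term_le hν w)

lemma bE_nonneg {ν : ℝ} (hν : 0 ≤ ν) {w : ℝ} (hw : 0 ≤ w) : 0 ≤ bE ν w :=
  tsum_nonneg fun k => by
    have := bE_gpos hν k
    positivity

lemma bE_le {ν : ℝ} (hν : 0 ≤ ν) {x : ℝ} (hx : 0 ≤ x) :
    bE ν (x ^ 2 / 4) ≤ (Real.Gamma (ν + 1))⁻¹ * Real.exp x := by
  have hG : 0 < Real.Gamma (ν + 1) := Real.Gamma_pos_of_pos (by linarith)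
  have hs : HasSum (fun n : ℕ => (x / 2) ^ n / (Nat.factorial n : ℝ)) (Real.exp (x / 2)) := by
    rw [Real.exp_eq_exp_ℝ]; exact NormedSpace.expSeries_div_hasSum_exp (x / 2)
  have hs2 := hs.mul_left ((Real.Gamma (ν + 1))⁻¹ * Real.exp (x / 2))
  have e : (Real.Gamma (ν + 1))⁻¹ * Real.exp x
      = (Real.Gamma (ν + 1))⁻¹ * Real.exp (x / 2) * Real.exp (x / 2) := by
    rw [mul_assoc, ← Real.exp_add]; ring_nf
  rw [e, ← hs2.tsum_eq]
  refine (bE_summable hν _).tsum_le_tsum (fun k => ?_) hs2.summable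
  have h1 : (x / 2) ^ k / (Nat.factorial k : ℝ) ≤ Real.exp (x / 2) :=
    Real.pow_div_factorial_le_exp (x / 2) (by positivity) k
  have e2 : (x ^ 2 / 4) ^ k = (x / 2) ^ k * (x / 2) ^ k := by
    rw [← mul_pow]; ring_nf
  rw [e2, div_eq_mul_inv]
  calc (x / 2) ^ k * (x / 2) ^ k * ((Nat.factorial k : ℝ) * Real.Gamma ((k : ℝ) + ν + 1))⁻¹
      ≤ (x / 2) ^ k * (x / 2) ^ k * ((Real.Gamma (ν + 1))⁻¹ * ((Nat.factorial k : ℝ) * (Nat.factorial k : ℝ))⁻¹) := by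
        gcongr; exact bE_coef hν k
    _ = (Real.Gamma (ν + 1))⁻¹ * ((x / 2) ^ k / (Nat.factorial k : ℝ)) * ((x / 2) ^ k / (Nat.factorial k : ℝ)) := by
        field_simp
    _ ≤ _ := by gcongr

lemma bE_hasDerivAt {ν : ℝ} (hν : 0 ≤ ν) (w : ℝ) : HasDerivAt (bE ν) (bE (ν + 1) w) w := by
  have hG : 0 < Real.Gamma (ν + 1) := Real.Gamma_pos_of_pos (by linarith)
  set R := |w| + 1 with hR
  have hR0 : 0 < R := by positivity
  set f' : ℕ → ℝ → ℝ := fun k x =>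
    (k : ℝ) * x ^ (k - 1) / ((Nat.factorial k : ℝ) * Real.Gamma ((k : ℝ) + ν + 1)) with hf'
  have hshift : ∀ (k : ℕ) (x : ℝ), f' (k + 1) x
      = x ^ k / ((Nat.factorial k : ℝ) * Real.Gamma ((k : ℝ) + (ν + 1) + 1)) := by
    intro k x
    simp only [hf', Nat.add_sub_cancel, Nat.factorial_succ]
    have h1 : ((k + 1 : ℕ) : ℝ) + ν + 1 = (k : ℝ) + (ν + 1) + 1 := by push_cast; ring
    rw [h1]
    have := bE_gpos (ν := ν + 1) (by linarith) k
    push_cast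
    field_simp
  have hu : Summable (fun k : ℕ => if k = 0 then (0 : ℝ) else
      (Real.Gamma (ν + 1 + 1))⁻¹ * (R ^ (k - 1) / (Nat.factorial (k - 1) : ℝ))) := by
    rw [← summable_nat_add_iff 1]
    simpa using (Real.summable_pow_div_factorial R).mul_left _
  have key := hasDerivAt_tsum_of_isPreconnected (𝕜 := ℝ) (t := Metric.ball (0 : ℝ) R)
    (g := fun (k : ℕ) (x : ℝ) => x ^ k / ((Nat.factorial k : ℝ) * Real.Gamma ((k : ℝ) + ν + 1)))
    (g' := f') hu Metric.isOpen_ball (convex_ball _ _).isPreconnected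
    (fun k x _ => by simpa [hf'] using (hasDerivAt_pow k x).div_const _)
    (fun k x hx => by
      rcases k with _ | k
      · simp [hf']
      · rw [hshift]
        refine (bE_term_le (by linarith) x k).trans ?_
        have hG2 : 0 < Real.Gamma (ν + 1 + 1) := Real.Gamma_pos_of_pos (by linarith)
        have : |x| ≤ R := by simpa using (mem_ball_zero_iff.1 hx).le
        simp only [Nat.add_eq_zero_iff, one_ne_zero, and_false, if_false, Nat.add_sub_cancel]
        gcongr)
    (y₀ := w) (y := w) (by simp [hR]) (bE_summable hν w) (by simp [hR])
  have e : ∑' k, f' k w = bE (ν + 1) w := by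
    have hsm : Summable (fun k => f' k w) := by
      rw [← summable_nat_add_iff 1]
      simp only [hshift]
      exact bE_summable (by linarith) w
    rw [hsm.tsum_eq_zero_add]
    simp only [hshift]
    simp [hf', bE]
  rw [e] at key
  exact key

lemma bE_rec {ν : ℝ} (hν : 0 ≤ ν) (w : ℝ) :
    bE ν w = (ν + 1) * bE (ν + 1) w + w * bE (ν + 2) w := by
  have s0 := bE_summable hν w
  have s1 := bE_summable (ν := ν + 1) (by linarith) w
  have s2 := bE_summable (ν := ν + 2) (by linarith) w
  have e2 : w * bE (ν + 2) w = ∑' k : ℕ, (k : ℝ) * w ^ k / ((Nat.factorial k : ℝ) * Real.Gamma ((k : ℝ) + (ν + 1) + 1)) ∧ Summable (fun k : ℕ => (k : ℝ) * w ^ k / ((Nat.factorial k : ℝ) * Real.Gamma ((k : ℝ) + (ν + 1) + 1))) := by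
    have hsh : ∀ k : ℕ, ((k + 1 : ℕ) : ℝ) * w ^ (k + 1) / ((Nat.factorial (k + 1) : ℝ) * Real.Gamma (((k + 1 : ℕ) : ℝ) + (ν + 1) + 1)) = w * (w ^ k / ((Nat.factorial k : ℝ) * Real.Gamma ((k : ℝ) + (ν + 2) + 1))) := by
      intro k
      have h1 : ((k + 1 : ℕ) : ℝ) + (ν + 1) + 1 = (k : ℝ) + (ν + 2) + 1 := by push_cast; ring
      rw [h1, Nat.factorial_succ]
      have := bE_gpos (ν := ν + 2) (by linarith) k
      push_cast
      field_simp
      ring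
    have hsm : Summable (fun k : ℕ => (k : ℝ) * w ^ k / ((Nat.factorial k : ℝ) * Real.Gamma ((k : ℝ) + (ν + 1) + 1))) := by
      rw [← summable_nat_add_iff 1]
      simp only [hsh]
      exact s2.mul_left w
    refine ⟨?_, hsm⟩
    rw [hsm.tsum_eq_zero_add]
    simp only [hsh]
    rw [tsum_mul_left]
    simp [bE]
  rw [e2.1]
  unfold bE
  rw [← tsum_mul_left, ← (s1.mul_left (ν + 1)).tsum_add e2.2]
  refine tsum_congr fun k => ?_
  have h0 : (0 : ℝ) < (k : ℝ) + ν + 1 := by positivity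
  have h1 : (k : ℝ) + (ν + 1) + 1 = ((k : ℝ) + ν + 1) + 1 := by ring
  have := bE_gpos hν k
  rw [h1, Real.Gamma_add_one h0.ne']
  field_simp
  ring

/-- Building block `s^{-m} exp(-(z²+ζ²)/(2s)) E_ν(z²ζ²/(4s²))`, extended by `0` for `s ≤ 0`. -/
noncomputable def bH (ν m s z ζ : ℝ) : ℝ :=
  if 0 < s then s ^ (-m) * Real.exp (-(z ^ 2 + ζ ^ 2) / (2 * s)) * bE ν (z ^ 2 * ζ ^ 2 / (4 * s ^ 2))
  else 0

lemma bH_pos {ν m s z ζ : ℝ} (hs : 0 < s) : bH ν m s z ζ =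
    s ^ (-m) * Real.exp (-(z ^ 2 + ζ ^ 2) / (2 * s)) * bE ν (z ^ 2 * ζ ^ 2 / (4 * s ^ 2)) := by
  simp [bH, hs]

lemma bH_nonpos {ν m s z ζ : ℝ} (hs : s ≤ 0) : bH ν m s z ζ = 0 := by
  simp [bH, not_lt.2 hs]

lemma bH_abs_le {ν m s z ζ : ℝ} (hν : 0 ≤ ν) (hs : 0 < s) (hz : 0 < z) (hζ : 0 < ζ) :
    |bH ν m s z ζ| ≤ (Real.Gamma (ν + 1))⁻¹ * (s ^ (-m) * Real.exp (-(z - ζ) ^ 2 / (2 * s))) := by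
  rw [bH_pos hs]
  have e : z ^ 2 * ζ ^ 2 / (4 * s ^ 2) = (z * ζ / s) ^ 2 / 4 := by field_simp
  have h1 := bE_le hν (x := z * ζ / s) (by positivity)
  have h0 := bE_nonneg hν (w := (z * ζ / s) ^ 2 / 4) (by positivity)
  rw [e, abs_of_nonneg (by positivity)]
  calc _ ≤ s ^ (-m) * Real.exp (-(z ^ 2 + ζ ^ 2) / (2 * s)) *
        ((Real.Gamma (ν + 1))⁻¹ * Real.exp (z * ζ / s)) := by gcongr
    _ = (Real.Gamma (ν + 1))⁻¹ * (s ^ (-m) * (Real.exp (-(z ^ 2 + ζ ^ 2) / (2 * s)) *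
          Real.exp (z * ζ / s))) := by ring
    _ = _ := by
      rw [← Real.exp_add]
      congr 4
      field_simp
      ring

lemma rpow_exp_tendsto (m d : ℝ) (hd : 0 < d) :
    Filter.Tendsto (fun s : ℝ => s ^ (-m) * Real.exp (-d / (2 * s))) (nhdsWithin 0 (Set.Ioi 0))
      (nhds 0) := by
  have h := (tendsto_rpow_mul_exp_neg_mul_atTop_nhds_zero m (d / 2) (by positivity)).comp
    tendsto_inv_nhdsGT_zero
  refine h.congr' ?_
  filter_upwards [self_mem_nhdsWithin] with s hs
  have hs : 0 < s := hs
  simp only [Function.comp]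
  rw [Real.inv_rpow hs.le, Real.rpow_neg hs.le]
  congr 2
  field_simp

lemma bE_continuous {ν : ℝ} (hν : 0 ≤ ν) : Continuous (bE ν) :=
  continuous_iff_continuousAt.2 fun w => (bE_hasDerivAt hν w).continuousAt

lemma bH_continuousAt {ν m s z ζ : ℝ} (hν : 0 ≤ ν) (hz : 0 < z) (hζ : 0 < ζ) (hne : z ≠ ζ) :
    ContinuousAt (fun p : ℝ × ℝ × ℝ => bH ν m p.1 p.2.1 p.2.2) (s, z, ζ) := by
  rcases lt_trichotomy s 0 with hs | hs | hs
  · have : (fun p : ℝ × ℝ × ℝ => bH ν m p.1 p.2.1 p.2.2) =ᶠ[nhds (s, z, ζ)] fun _ => 0 := by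
      have : ∀ᶠ p : ℝ × ℝ × ℝ in nhds (s, z, ζ), p.1 < 0 :=
        continuousAt_fst.eventually (gt_mem_nhds hs)
      filter_upwards [this] with p hp using bH_nonpos hp.le
    exact continuousAt_const.congr this.symm
  · subst hs
    have hd : 0 < (z - ζ) ^ 2 / 2 := by
      have := sub_ne_zero.2 hne
      positivity
    unfold ContinuousAt
    simp only [bH_nonpos le_rfl]
    rw [Metric.tendsto_nhds]
    intro ε hε
    have hG : 0 < Real.Gamma (ν + 1) := Real.Gamma_pos_of_pos (by linarith)
    have h1 := ((rpow_exp_tendsto m _ hd).const_mul (Real.Gamma (ν + 1))⁻¹)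
    rw [mul_zero] at h1
    have h2 := h1.eventually (gt_mem_nhds hε)
    rw [eventually_nhdsWithin_iff] at h2
    have h3 : ∀ᶠ p : ℝ × ℝ × ℝ in nhds ((0 : ℝ), z, ζ), (p.1 ∈ Set.Ioi (0:ℝ) →
      (Real.Gamma (ν + 1))⁻¹ * (p.1 ^ (-m) * Real.exp (-((z - ζ) ^ 2 / 2) / (2 * p.1))) < ε) :=
      (continuousAt_fst (p := ((0 : ℝ), z, ζ))).eventually h2
    have c1 : ∀ᶠ p : ℝ × ℝ × ℝ in nhds ((0 : ℝ), z, ζ), 0 < p.2.1 :=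
      (by fun_prop : ContinuousAt (fun p : ℝ × ℝ × ℝ => p.2.1) ((0 : ℝ), z, ζ)).eventually
        (lt_mem_nhds hz)
    have c2 : ∀ᶠ p : ℝ × ℝ × ℝ in nhds ((0 : ℝ), z, ζ), 0 < p.2.2 :=
      (by fun_prop : ContinuousAt (fun p : ℝ × ℝ × ℝ => p.2.2) ((0 : ℝ), z, ζ)).eventually
        (lt_mem_nhds hζ)
    have c3 : ∀ᶠ p : ℝ × ℝ × ℝ in nhds ((0 : ℝ), z, ζ), (z - ζ) ^ 2 / 2 < (p.2.1 - p.2.2) ^ 2 :=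
      (by fun_prop : ContinuousAt (fun p : ℝ × ℝ × ℝ => (p.2.1 - p.2.2) ^ 2) ((0 : ℝ), z, ζ)).eventually
        (lt_mem_nhds (by dsimp only; linarith))
    filter_upwards [h3, c1, c2, c3] with p p3 q1 q2 q3
    rw [Real.dist_eq, sub_zero]
    rcases le_or_gt p.1 0 with hp | hp
    · rw [bH_nonpos hp]; simpa using hε
    · refine (bH_abs_le hν hp q1 q2).trans_lt (lt_of_le_of_lt ?_ (p3 hp))
      gcongr
  · have hne4 : (4 * s ^ 2 : ℝ) ≠ 0 := by positivity
    have hne2 : (2 * s : ℝ) ≠ 0 := by positivity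
    have hc : ContinuousAt (fun p : ℝ × ℝ × ℝ => p.1 ^ (-m) * Real.exp (-(p.2.1 ^ 2 + p.2.2 ^ 2) / (2 * p.1)) *
        bE ν (p.2.1 ^ 2 * p.2.2 ^ 2 / (4 * p.1 ^ 2))) (s, z, ζ) := by
      refine ContinuousAt.mul (ContinuousAt.mul ?_ ?_) ?_
      · exact continuousAt_fst.rpow_const (Or.inl hs.ne')
      · refine Real.continuous_exp.continuousAt.comp (ContinuousAt.div ?_ ?_ hne2) <;> fun_prop
      · refine (bE_continuous hν).continuousAt.comp (ContinuousAt.div ?_ ?_ hne4) <;> fun_prop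
    refine hc.congr ?_
    have : ∀ᶠ p : ℝ × ℝ × ℝ in nhds (s, z, ζ), 0 < p.1 :=
      continuousAt_fst.eventually (lt_mem_nhds hs)
    filter_upwards [this] with p hp using (bH_pos hp).symm

lemma bH_continuous {X : Type*} [TopologicalSpace X] {ν m : ℝ} (hν : 0 ≤ ν) {s z ζ : X → ℝ}
    (hs : Continuous s) (hz : Continuous z) (hζ : Continuous ζ) (pz : ∀ x, 0 < z x)
    (pζ : ∀ x, 0 < ζ x) (hne : ∀ x, z x ≠ ζ x) :
    Continuous (fun x => bH ν m (s x) (z x) (ζ x)) := by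
  rw [continuous_iff_continuousAt]
  intro x
  exact ContinuousAt.comp (f := fun x => (s x, z x, ζ x))
    (bH_continuousAt hν (pz x) (pζ x) (hne x))
    (by fun_prop)

lemma bH_symm (ν m s z ζ : ℝ) : bH ν m s z ζ = bH ν m s ζ z := by
  unfold bH
  rw [add_comm, mul_comm (z ^ 2)]

lemma bH_deriv_z {ν ν' m m1 m2 : ℝ} (hν : 0 ≤ ν) (e : ν' = ν + 1) (e1 : m1 = m + 1)
    (e2 : m2 = m + 2) (s z ζ : ℝ) :
    HasDerivAt (fun z => bH ν m s z ζ)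
      (-z * bH ν m1 s z ζ + z * ζ ^ 2 / 2 * bH ν' m2 s z ζ) z := by
  subst e e1 e2
  rcases le_or_gt s 0 with hs | hs
  · simp only [bH_nonpos hs]
    simpa using hasDerivAt_const z (0 : ℝ)
  · simp only [bH_pos hs]
    have d1 : HasDerivAt (fun z : ℝ => -(z ^ 2 + ζ ^ 2) / (2 * s)) (-(2 * z) / (2 * s)) z := by
      have := (((hasDerivAt_pow 2 z).add_const (ζ ^ 2)).neg).div_const (2 * s)
      convert! this using 1
      simp
    have d2 : HasDerivAt (fun z : ℝ => z ^ 2 * ζ ^ 2 / (4 * s ^ 2)) (2 * z * ζ ^ 2 / (4 * s ^ 2)) z := by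
      have := ((hasDerivAt_pow 2 z).mul_const (ζ ^ 2)).div_const (4 * s ^ 2)
      convert! this using 1
      simp
    have d3 := (bE_hasDerivAt hν (z ^ 2 * ζ ^ 2 / (4 * s ^ 2))).comp z d2
    have := ((d1.exp).const_mul (s ^ (-m))).mul d3
    convert! this using 1
    have r1 : s ^ (-(m + 1)) = s ^ (-m) / s := by
      rw [neg_add, Real.rpow_add hs, Real.rpow_neg_one]; rfl
    have r2 : s ^ (-(m + 2)) = s ^ (-m) / s ^ 2 := by
      rw [neg_add, Real.rpow_add hs, Real.rpow_neg hs.le 2]; norm_cast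
    rw [r1, r2]
    simp only [Function.comp]
    field_simp
    ring

lemma bH_deriv_ζ {ν ν' m m1 m2 : ℝ} (hν : 0 ≤ ν) (e : ν' = ν + 1) (e1 : m1 = m + 1)
    (e2 : m2 = m + 2) (s z ζ : ℝ) :
    HasDerivAt (fun ζ => bH ν m s z ζ)
      (-ζ * bH ν m1 s z ζ + ζ * z ^ 2 / 2 * bH ν' m2 s z ζ) ζ := by
  have := bH_deriv_z hν e e1 e2 s ζ z
  simpa only [bH_symm _ _ s _ z] using this

lemma bH_deriv_s {ν ν' m m1 m2 m3 : ℝ} (hν : 0 ≤ ν) (e : ν' = ν + 1) (e1 : m1 = m + 1)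
    (e2 : m2 = m + 2) (e3 : m3 = m + 3) (s : ℝ) {z ζ : ℝ} (hz : 0 < z) (hζ : 0 < ζ) (hne : z ≠ ζ) :
    HasDerivAt (fun s => bH ν m s z ζ)
      (-m * bH ν m1 s z ζ + (z ^ 2 + ζ ^ 2) / 2 * bH ν m2 s z ζ
        - z ^ 2 * ζ ^ 2 / 2 * bH ν' m3 s z ζ) s := by
  have hν' : 0 ≤ ν' := by linarith
  have C : ∀ (μ k : ℝ), 0 ≤ μ → Continuous (fun s => bH μ k s z ζ) := fun μ k hμ =>
    bH_continuous hμ continuous_id continuous_const continuous_const (fun _ => hz) (fun _ => hζ)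
      (fun _ => hne)
  refine hasDerivAt_of_hasDerivAt_of_ne' (x := 0) (f := fun s => bH ν m s z ζ) (g := fun s => -m * bH ν m1 s z ζ + (z ^ 2 + ζ ^ 2) / 2 * bH ν m2 s z ζ
        - z ^ 2 * ζ ^ 2 / 2 * bH ν' m3 s z ζ) ?_ (C ν m hν).continuousAt ?_ s
  swap
  · have c1 := C ν m1 hν
    have c2 := C ν m2 hν
    have c3 := C ν' m3 hν'
    exact (by fun_prop : Continuous _).continuousAt
  intro s hs
  rcases lt_or_gt_of_ne hs with hs | hs
  · have : (fun s => bH ν m s z ζ) =ᶠ[nhds s] fun _ => 0 := by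
      filter_upwards [gt_mem_nhds hs] with p hp using bH_nonpos (le_of_lt hp)
    simp only [bH_nonpos hs.le]
    simpa using (hasDerivAt_const s (0 : ℝ)).congr_of_eventuallyEq this
  · have : (fun s => bH ν m s z ζ) =ᶠ[nhds s] fun s => s ^ (-m) * Real.exp (-(z ^ 2 + ζ ^ 2) / (2 * s)) * bE ν (z ^ 2 * ζ ^ 2 / (4 * s ^ 2)) := by
      filter_upwards [lt_mem_nhds hs] with p hp using bH_pos hp
    refine HasDerivAt.congr_of_eventuallyEq ?_ this
    subst e e1 e2 e3
    simp only [bH_pos hs]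
    have d0 : HasDerivAt (fun s : ℝ => s ^ (-m)) (-m * s ^ (-m - 1)) s :=
      Real.hasDerivAt_rpow_const (Or.inl hs.ne')
    have d1 : HasDerivAt (fun s : ℝ => -(z ^ 2 + ζ ^ 2) / (2 * s)) ((z ^ 2 + ζ ^ 2) / (2 * s ^ 2)) s := by
      have := (hasDerivAt_const s (-(z ^ 2 + ζ ^ 2))).div ((hasDerivAt_id s).const_mul 2) (by simpa using hs.ne')
      convert! this using 1
      simp
      field_simp
      ring
    have d2 : HasDerivAt (fun s : ℝ => z ^ 2 * ζ ^ 2 / (4 * s ^ 2)) (-(z ^ 2 * ζ ^ 2) / (2 * s ^ 3)) s := by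
      have := (hasDerivAt_const s (z ^ 2 * ζ ^ 2)).div ((hasDerivAt_pow 2 s).const_mul 4) (by simpa using hs.ne')
      convert! this using 1
      simp
      field_simp
      ring
    have d3 := (bE_hasDerivAt hν (z ^ 2 * ζ ^ 2 / (4 * s ^ 2))).comp s d2
    have := (d0.mul d1.exp).mul d3
    convert! this using 1
    have r0 : s ^ (-m - 1) = s ^ (-m) / s := by
      rw [sub_eq_add_neg, Real.rpow_add hs, Real.rpow_neg_one]; rfl
    have r1 : s ^ (-(m + 1)) = s ^ (-m) / s := by
      rw [neg_add, Real.rpow_add hs, Real.rpow_neg_one]; rfl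
    have r2 : s ^ (-(m + 2)) = s ^ (-m) / s ^ 2 := by
      rw [neg_add, Real.rpow_add hs, Real.rpow_neg hs.le 2]; norm_cast
    have r3 : s ^ (-(m + 3)) = s ^ (-m) / s ^ 3 := by
      rw [neg_add, Real.rpow_add hs, Real.rpow_neg hs.le 3]; norm_cast
    rw [r0, r1, r2, r3]
    simp only [Function.comp, Pi.mul_apply]
    field_simp
    ring

lemma bH_rec {ν ν1 ν2 m m2 : ℝ} (hν : 0 ≤ ν) (e1 : ν1 = ν + 1) (e2 : ν2 = ν + 2)
    (e3 : m2 = m + 2) (s z ζ : ℝ) :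
    bH ν m s z ζ = (ν + 1) * bH ν1 m s z ζ + z ^ 2 * ζ ^ 2 / 4 * bH ν2 m2 s z ζ := by
  subst e1 e2 e3
  rcases le_or_gt s 0 with hs | hs
  · simp [bH_nonpos hs]
  · simp only [bH_pos hs]
    rw [bE_rec hν]
    have r2 : s ^ (-(m + 2)) = s ^ (-m) / s ^ 2 := by
      rw [neg_add, Real.rpow_add hs, Real.rpow_neg hs.le 2]; norm_cast
    rw [r2]
    field_simp

noncomputable def bh (b : ℝ) (i j : ℕ) (s z ζ : ℝ) : ℝ := bH (b - 1 / 2 + i) (b + 1 / 2 + j) s z ζ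

/-- `∂_z` of `bh`, divided by `z`. -/
noncomputable def dh (b : ℝ) (i j : ℕ) (s z ζ : ℝ) : ℝ :=
  -bh b i (j + 1) s z ζ + ζ ^ 2 / 2 * bh b (i + 1) (j + 2) s z ζ

noncomputable def sh (b : ℝ) (i j : ℕ) (s z ζ : ℝ) : ℝ :=
  -(b + 1 / 2 + j) * bh b i (j + 1) s z ζ + (z ^ 2 + ζ ^ 2) / 2 * bh b i (j + 2) s z ζ
    - z ^ 2 * ζ ^ 2 / 2 * bh b (i + 1) (j + 3) s z ζ

lemma bh_nn {b : ℝ} (hb : 1 / 2 ≤ b) (i : ℕ) : 0 ≤ b - 1 / 2 + i := by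
  have : (0 : ℝ) ≤ i := by positivity
  linarith

lemma bh_dz {b : ℝ} (hb : 1 / 2 ≤ b) (i j : ℕ) (s z ζ : ℝ) :
    HasDerivAt (fun z => bh b i j s z ζ) (z * dh b i j s z ζ) z := by
  have := bH_deriv_z (bh_nn hb i) (m := b + 1 / 2 + j) (ν' := b - 1 / 2 + (i + 1 : ℕ))
    (m1 := b + 1 / 2 + (j + 1 : ℕ)) (m2 := b + 1 / 2 + (j + 2 : ℕ))
    (by push_cast; ring) (by push_cast; ring) (by push_cast; ring) s z ζ
  refine this.congr_deriv ?_
  unfold dh bh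
  ring

lemma bh_dζ {b : ℝ} (hb : 1 / 2 ≤ b) (i j : ℕ) (s z ζ : ℝ) :
    HasDerivAt (fun ζ => bh b i j s z ζ)
      (-ζ * bh b i (j + 1) s z ζ + ζ * z ^ 2 / 2 * bh b (i + 1) (j + 2) s z ζ) ζ :=
  bH_deriv_ζ (bh_nn hb i) (m := b + 1 / 2 + j) (ν' := b - 1 / 2 + (i + 1 : ℕ))
    (m1 := b + 1 / 2 + (j + 1 : ℕ)) (m2 := b + 1 / 2 + (j + 2 : ℕ))
    (by push_cast; ring) (by push_cast; ring) (by push_cast; ring) s z ζ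

lemma bh_ds {b : ℝ} (hb : 1 / 2 ≤ b) (i j : ℕ) (s : ℝ) {z ζ : ℝ} (hz : 0 < z) (hζ : 0 < ζ)
    (hne : z ≠ ζ) :
    HasDerivAt (fun s => bh b i j s z ζ) (sh b i j s z ζ) s :=
  bH_deriv_s (bh_nn hb i) (m := b + 1 / 2 + j) (ν' := b - 1 / 2 + (i + 1 : ℕ))
    (m1 := b + 1 / 2 + (j + 1 : ℕ)) (m2 := b + 1 / 2 + (j + 2 : ℕ)) (m3 := b + 1 / 2 + (j + 3 : ℕ))
    (by push_cast; ring) (by push_cast; ring) (by push_cast; ring) (by push_cast; ring) s hz hζ hne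

lemma bh_rec {b : ℝ} (hb : 1 / 2 ≤ b) (i j : ℕ) (s z ζ : ℝ) :
    bh b i j s z ζ = (b + 1 / 2 + i) * bh b (i + 1) j s z ζ
      + z ^ 2 * ζ ^ 2 / 4 * bh b (i + 2) (j + 2) s z ζ := by
  have := bH_rec (bh_nn hb i) (m := b + 1 / 2 + j) (ν1 := b - 1 / 2 + (i + 1 : ℕ))
    (ν2 := b - 1 / 2 + (i + 2 : ℕ)) (m2 := b + 1 / 2 + (j + 2 : ℕ))
    (by push_cast; ring) (by push_cast; ring) (by push_cast; ring) s z ζ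
  unfold bh
  rw [this]
  ring

/-- joint continuity away from the diagonal -/
def GoodJ (J : ℝ → ℝ → ℝ → ℝ) : Prop :=
  ∀ (s z ζ : ℝ × ℝ → ℝ), Continuous s → Continuous z → Continuous ζ → (∀ x, 0 < z x) →
    (∀ x, 0 < ζ x) → (∀ x, z x ≠ ζ x) → Continuous (fun x => J (s x) (z x) (ζ x))

lemma good_bh {b : ℝ} (hb : 1 / 2 ≤ b) (i j : ℕ) : GoodJ (bh b i j) :=
  fun _ _ _ hs hz hζ pz pζ hne => bH_continuous (bh_nn hb i) hs hz hζ pz pζ hne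

lemma good_dh {b : ℝ} (hb : 1 / 2 ≤ b) (i j : ℕ) : GoodJ (dh b i j) := by
  intro s z ζ hs hz hζ pz pζ hne
  have c := fun i j => good_bh hb i j s z ζ hs hz hζ pz pζ hne
  have c1 := c i (j + 1)
  have c2 := c (i + 1) (j + 2)
  unfold dh
  fun_prop

lemma good_sh {b : ℝ} (hb : 1 / 2 ≤ b) (i j : ℕ) : GoodJ (sh b i j) := by
  intro s z ζ hs hz hζ pz pζ hne
  have c := fun i j => good_bh hb i j s z ζ hs hz hζ pz pζ hne
  have c1 := c i (j + 1)
  have c2 := c i (j + 2)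
  have c3 := c (i + 1) (j + 3)
  unfold sh
  fun_prop

noncomputable def bK (b s z ζ : ℝ) : ℝ :=
  2 ^ (-(b - 1 / 2)) * (2 * b * ζ ^ (2 * b - 1) * bh b 0 0 s z ζ
    + ζ ^ (2 * b) * (-ζ * bh b 0 1 s z ζ + ζ * z ^ 2 / 2 * bh b 1 2 s z ζ))

/-- `∂_z bK / z` -/
noncomputable def bL (b s z ζ : ℝ) : ℝ :=
  2 ^ (-(b - 1 / 2)) * (2 * b * ζ ^ (2 * b - 1) * dh b 0 0 s z ζ
    + ζ ^ (2 * b) * (-ζ * dh b 0 1 s z ζ + ζ * (bh b 1 2 s z ζ + z ^ 2 / 2 * dh b 1 2 s z ζ)))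

noncomputable def bKz (b s z ζ : ℝ) : ℝ := z * bL b s z ζ

/-- `∂_z dh`, divided by `z` -/
noncomputable def ddh (b : ℝ) (i j : ℕ) (s z ζ : ℝ) : ℝ :=
  -dh b i (j + 1) s z ζ + ζ ^ 2 / 2 * dh b (i + 1) (j + 2) s z ζ

noncomputable def bKzz (b s z ζ : ℝ) : ℝ :=
  bL b s z ζ + z ^ 2 * (2 ^ (-(b - 1 / 2)) * (2 * b * ζ ^ (2 * b - 1) * ddh b 0 0 s z ζ
    + ζ ^ (2 * b) * (-ζ * ddh b 0 1 s z ζ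
      + ζ * (2 * dh b 1 2 s z ζ + z ^ 2 / 2 * ddh b 1 2 s z ζ))))

noncomputable def bKs (b s z ζ : ℝ) : ℝ :=
  2 ^ (-(b - 1 / 2)) * (2 * b * ζ ^ (2 * b - 1) * sh b 0 0 s z ζ
    + ζ ^ (2 * b) * (-ζ * sh b 0 1 s z ζ + ζ * z ^ 2 / 2 * sh b 1 2 s z ζ))

lemma good_bK {b : ℝ} (hb : 1 / 2 ≤ b) : GoodJ (bK b) := by
  intro s z ζ hs hz hζ pz pζ hne
  have c := fun i j => good_bh hb i j s z ζ hs hz hζ pz pζ hne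
  have c1 := c 0 0
  have c2 := c 0 1
  have c3 := c 1 2
  have p1 : Continuous fun x => ζ x ^ (2 * b - 1) := hζ.rpow_const fun x => Or.inl (pζ x).ne'
  have p2 : Continuous fun x => ζ x ^ (2 * b) := hζ.rpow_const fun x => Or.inl (pζ x).ne'
  unfold bK
  fun_prop

lemma good_bL {b : ℝ} (hb : 1 / 2 ≤ b) : GoodJ (bL b) := by
  intro s z ζ hs hz hζ pz pζ hne
  have c := fun i j => good_bh hb i j s z ζ hs hz hζ pz pζ hne
  have d := fun i j => good_dh hb i j s z ζ hs hz hζ pz pζ hne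
  have c1 := d 0 0
  have c2 := d 0 1
  have c3 := c 1 2
  have c4 := d 1 2
  have p1 : Continuous fun x => ζ x ^ (2 * b - 1) := hζ.rpow_const fun x => Or.inl (pζ x).ne'
  have p2 : Continuous fun x => ζ x ^ (2 * b) := hζ.rpow_const fun x => Or.inl (pζ x).ne'
  unfold bL
  fun_prop

lemma good_bKz {b : ℝ} (hb : 1 / 2 ≤ b) : GoodJ (bKz b) := by
  intro s z ζ hs hz hζ pz pζ hne
  exact hz.mul (good_bL hb s z ζ hs hz hζ pz pζ hne)

lemma good_ddh {b : ℝ} (hb : 1 / 2 ≤ b) (i j : ℕ) : GoodJ (ddh b i j) := by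
  intro s z ζ hs hz hζ pz pζ hne
  have c := fun i j => good_dh hb i j s z ζ hs hz hζ pz pζ hne
  have c1 := c i (j + 1)
  have c2 := c (i + 1) (j + 2)
  unfold ddh
  fun_prop

lemma good_bKzz {b : ℝ} (hb : 1 / 2 ≤ b) : GoodJ (bKzz b) := by
  intro s z ζ hs hz hζ pz pζ hne
  have c0 := good_bL hb s z ζ hs hz hζ pz pζ hne
  have c := fun i j => good_ddh hb i j s z ζ hs hz hζ pz pζ hne
  have d := fun i j => good_dh hb i j s z ζ hs hz hζ pz pζ hne
  have c1 := c 0 0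
  have c2 := c 0 1
  have c3 := d 1 2
  have c4 := c 1 2
  have p1 : Continuous fun x => ζ x ^ (2 * b - 1) := hζ.rpow_const fun x => Or.inl (pζ x).ne'
  have p2 : Continuous fun x => ζ x ^ (2 * b) := hζ.rpow_const fun x => Or.inl (pζ x).ne'
  unfold bKzz
  fun_prop

lemma good_bKs {b : ℝ} (hb : 1 / 2 ≤ b) : GoodJ (bKs b) := by
  intro s z ζ hs hz hζ pz pζ hne
  have c := fun i j => good_sh hb i j s z ζ hs hz hζ pz pζ hne
  have c1 := c 0 0
  have c2 := c 0 1
  have c3 := c 1 2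
  have p1 : Continuous fun x => ζ x ^ (2 * b - 1) := hζ.rpow_const fun x => Or.inl (pζ x).ne'
  have p2 : Continuous fun x => ζ x ^ (2 * b) := hζ.rpow_const fun x => Or.inl (pζ x).ne'
  unfold bKs
  fun_prop

lemma bK_ds {b : ℝ} (hb : 1 / 2 ≤ b) (s : ℝ) {z ζ : ℝ} (hz : 0 < z) (hζ : 0 < ζ)
    (hne : z ≠ ζ) : HasDerivAt (fun s => bK b s z ζ) (bKs b s z ζ) s := by
  have d := fun i j => bh_ds hb i j s hz hζ hne
  exact (((d 0 0).const_mul _).add (((d 0 1).const_mul (-ζ)).add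
    ((d 1 2).const_mul (ζ * z ^ 2 / 2)) |>.const_mul _)).const_mul _

lemma bK_dz {b : ℝ} (hb : 1 / 2 ≤ b) (s z ζ : ℝ) :
    HasDerivAt (fun z => bK b s z ζ) (bKz b s z ζ) z := by
  have d := fun i j => bh_dz hb i j s z ζ
  have e : HasDerivAt (fun z : ℝ => ζ * z ^ 2 / 2) (ζ * z) z := by
    have := ((hasDerivAt_pow 2 z).const_mul ζ).div_const 2
    convert! this using 1
    simp
    ring
  have := (((d 0 0).const_mul (2 * b * ζ ^ (2 * b - 1))).add (((d 0 1).const_mul (-ζ)).add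
    (e.mul (d 1 2)) |>.const_mul (ζ ^ (2 * b)))).const_mul ((2 : ℝ) ^ (-(b - 1 / 2)))
  refine this.congr_deriv ?_
  unfold bKz bL
  ring

lemma dh_dz {b : ℝ} (hb : 1 / 2 ≤ b) (i j : ℕ) (s z ζ : ℝ) :
    HasDerivAt (fun z => dh b i j s z ζ) (z * ddh b i j s z ζ) z := by
  have d := fun i j => bh_dz hb i j s z ζ
  refine ((d i (j + 1)).neg.add ((d (i + 1) (j + 2)).const_mul (ζ ^ 2 / 2))).congr_deriv ?_
  unfold ddh
  ring

lemma bKz_dz {b : ℝ} (hb : 1 / 2 ≤ b) (s z ζ : ℝ) :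
    HasDerivAt (fun z => bKz b s z ζ) (bKzz b s z ζ) z := by
  have d := fun i j => bh_dz hb i j s z ζ
  have d' := fun i j => dh_dz hb i j s z ζ
  have e : HasDerivAt (fun z : ℝ => z ^ 2 / 2) z z := by
    have := (hasDerivAt_pow 2 z).div_const 2
    convert! this using 1
    simp
  have := (((d' 0 0).const_mul (2 * b * ζ ^ (2 * b - 1))).add (((d' 0 1).const_mul (-ζ)).add
    (((d 1 2).add (e.mul (d' 1 2))).const_mul ζ) |>.const_mul (ζ ^ (2 * b)))).const_mul
    ((2 : ℝ) ^ (-(b - 1 / 2)))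
  have := (hasDerivAt_id z).mul this
  refine this.congr_deriv ?_
  unfold bKzz bL
  simp
  ring

lemma bK_pde {b : ℝ} (hb : 1 / 2 ≤ b) (s : ℝ) {z ζ : ℝ} (hz : 0 < z) (hζ : 0 < ζ) :
    bKs b s z ζ = 1 / 2 * bKzz b s z ζ + b / z * bKz b s z ζ := by
  have e : b / z * bKz b s z ζ = b * bL b s z ζ := by
    unfold bKz; field_simp
  have hB : ζ ^ (2 * b) = ζ * ζ ^ (2 * b - 1) := by
    rw [Real.rpow_sub_one hζ.ne']; field_simp
  rw [e]
  unfold bKs bKzz bL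
  rw [hB]
  generalize ζ ^ (2 * b - 1) = A
  generalize (2 : ℝ) ^ (-(b - 1 / 2)) = c
  have r1 := bh_rec hb 0 2 s z ζ
  have r2 := bh_rec hb 0 3 s z ζ
  have r3 := bh_rec hb 1 4 s z ζ
  unfold sh ddh dh
  norm_num only [Nat.cast_zero, Nat.cast_one, Nat.cast_ofNat] at r1 r2 r3 ⊢
  linear_combination c * A * ζ * ((b + 1) * ζ * r1 + ζ ^ 2 / 2 * (-ζ * r2 + z ^ 2 * ζ / 2 * r3))

lemma besselI_eq {ν x : ℝ} (hx : 0 < x) : besselI ν x = (x / 2) ^ ν * bE ν (x ^ 2 / 4) := by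
  unfold besselI bE
  rw [← tsum_mul_left]
  refine tsum_congr fun k => ?_
  have h2 : 0 < x / 2 := by positivity
  rw [Real.rpow_add h2, Real.rpow_mul h2.le, Real.rpow_natCast]
  have : (x / 2) ^ (2 : ℝ) = x ^ 2 / 4 := by
    norm_cast; ring
  rw [this]
  ring

lemma kernel_eq {b s z ζ : ℝ} (hs : 0 ≤ s) (hz : 0 < z) (hζ : 0 < ζ) :
    besselKernel b s z ζ = 2 ^ (-(b - 1 / 2)) * (ζ ^ (2 * b) * bh b 0 0 s z ζ) := by
  rcases hs.eq_or_lt with hs | hs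
  · subst hs
    simp [besselKernel, bh, bH]
  · unfold besselKernel bh
    rw [besselI_eq (by positivity), bH_pos hs]
    simp only [Nat.cast_zero, add_zero]
    have e : (z * ζ / s) ^ 2 / 4 = z ^ 2 * ζ ^ 2 / (4 * s ^ 2) := by field_simp
    rw [e]
    have key : Real.sqrt (z * ζ) / s * (ζ / z) ^ b * (z * ζ / s / 2) ^ (b - 1 / 2)
        = 2 ^ (-(b - 1 / 2)) * (ζ ^ (2 * b) * s ^ (-(b + 1 / 2))) := by
      have l1 : Real.sqrt (z * ζ) = Real.exp ((Real.log z + Real.log ζ) * (1 / 2)) := by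
        rw [Real.sqrt_eq_rpow, Real.rpow_def_of_pos (by positivity), Real.log_mul hz.ne' hζ.ne']
      have l2 : s = Real.exp (Real.log s) := (Real.exp_log hs).symm
      rw [Real.rpow_def_of_pos (by positivity : 0 < ζ / z), Real.rpow_def_of_pos (by positivity : 0 < z * ζ / s / 2), Real.rpow_def_of_pos (by positivity : (0 : ℝ) < 2), Real.rpow_def_of_pos hζ, Real.rpow_def_of_pos hs, Real.log_div hζ.ne' hz.ne', Real.log_div (by positivity) (by positivity), Real.log_div (by positivity) (by positivity), Real.log_mul hz.ne' hζ.ne', l1]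
      nth_rewrite 1 [l2]
      rw [← Real.exp_sub, ← Real.exp_add, ← Real.exp_add, ← Real.exp_add, ← Real.exp_add]
      congr 1
      ring
    linear_combination (Real.exp (-(z ^ 2 + ζ ^ 2) / (2 * s)) * bE (b - 1 / 2) (z ^ 2 * ζ ^ 2 / (4 * s ^ 2))) * key

lemma kernel_deriv {b s z ζ : ℝ} (hb : 1 / 2 ≤ b) (hs : 0 ≤ s) (hz : 0 < z) (hζ : 0 < ζ) :
    deriv (fun ζ => besselKernel b s z ζ) ζ = bK b s z ζ := by
  have he : (fun ζ => besselKernel b s z ζ) =ᶠ[nhds ζ]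
      fun ζ => 2 ^ (-(b - 1 / 2)) * (ζ ^ (2 * b) * bh b 0 0 s z ζ) := by
    filter_upwards [lt_mem_nhds hζ] with x hx using kernel_eq hs hz hx
  rw [he.deriv_eq]
  have d := ((Real.hasDerivAt_rpow_const (p := 2 * b) (Or.inl hζ.ne')).mul
    (bh_dζ hb 0 0 s z ζ)).const_mul ((2 : ℝ) ^ (-(b - 1 / 2)))
  exact d.deriv

lemma bK_nonpos {b s z ζ : ℝ} (hs : s ≤ 0) : bK b s z ζ = 0 := by
  simp [bK, bh, bH_nonpos hs]

noncomputable def clampR (x0 r x : ℝ) : ℝ := max (x0 - r) (min x (x0 + r))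

lemma clampR_cont (x0 r : ℝ) : Continuous (clampR x0 r) := by
  unfold clampR; fun_prop

lemma clampR_mem {x0 r : ℝ} (hr : 0 < r) (x : ℝ) : clampR x0 r x ∈ Set.Icc (x0 - r) (x0 + r) :=
  ⟨le_max_left _ _, max_le (by linarith) (min_le_right _ _)⟩

lemma clampR_eq {x0 r x : ℝ} (hx : x ∈ Set.Icc (x0 - r) (x0 + r)) : clampR x0 r x = x := by
  unfold clampR
  rw [min_eq_left hx.2, max_eq_right hx.1]

lemma param_cont {f : ℝ → ℝ → ℝ} {x0 r A : ℝ}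
    (hf : Continuous (fun p : ℝ × ℝ => f (clampR x0 r p.1) p.2)) :
    ContinuousOn (fun x => ∫ k in (0 : ℝ)..A, f x k) (Set.Icc (x0 - r) (x0 + r)) := by
  have h := intervalIntegral.continuous_parametric_intervalIntegral_of_continuous'
    (μ := MeasureTheory.volume) (f := fun x k => f (clampR x0 r x) k) hf 0 A
  refine h.continuousOn.congr fun x hx => ?_
  simp only [clampR_eq hx]

lemma param_deriv {f f' : ℝ → ℝ → ℝ} {x0 r A : ℝ} 
    (hf : Continuous (fun p : ℝ × ℝ => f (clampR x0 r p.1) p.2))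
    (hf' : Continuous (fun p : ℝ × ℝ => f' (clampR x0 r p.1) p.2))
    (hd : ∀ x ∈ Set.Icc (x0 - r) (x0 + r), ∀ k, HasDerivAt (fun x => f x k) (f' x k) x)
    (x : ℝ) (hx : x ∈ Set.Ioo (x0 - r) (x0 + r)) :
    HasDerivAt (fun x => ∫ k in (0 : ℝ)..A, f x k) (∫ k in (0 : ℝ)..A, f' x k) x := by
  have sl : ∀ g : ℝ → ℝ → ℝ, Continuous (fun p : ℝ × ℝ => g (clampR x0 r p.1) p.2) →
      ∀ x ∈ Set.Icc (x0 - r) (x0 + r), Continuous (g x) := by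
    intro g hg x hx
    have : Continuous (fun k => g (clampR x0 r x) k) :=
      hg.comp (by fun_prop : Continuous fun k : ℝ => (x, k))
    rwa [clampR_eq hx] at this
  obtain ⟨C, hC⟩ := (isCompact_Icc (a := x0 - r) (b := x0 + r)).prod
    (isCompact_uIcc (a := (0 : ℝ)) (b := A)) |>.exists_bound_of_continuousOn hf'.continuousOn
  have hxc := Set.Ioo_subset_Icc_self hx
  have hn := isOpen_Ioo.mem_nhds hx
  refine (intervalIntegral.hasDerivAt_integral_of_dominated_loc_of_deriv_le
    (bound := fun _ => C) (μ := MeasureTheory.volume) hn ?_ ((sl f hf x hxc).intervalIntegrable _ _)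
    (sl f' hf' x hxc).aestronglyMeasurable ?_ (by simp) ?_).2
  · filter_upwards [hn] with x hx
    exact (sl f hf x (Set.Ioo_subset_Icc_self hx)).aestronglyMeasurable
  · refine Filter.Eventually.of_forall fun k hk x hx => ?_
    have := hC (x, k) ⟨Set.Ioo_subset_Icc_self hx, Set.uIoc_subset_uIcc hk⟩
    simpa only [clampR_eq (Set.Ioo_subset_Icc_self hx)] using this
  · exact Filter.Eventually.of_forall fun k _ x hx => hd x (Set.Ioo_subset_Icc_self hx) k

section
/-- integrand attached to a kernel `J` -/
noncomputable def gG (ψ φ u v : ℝ → ℝ) (J : ℝ → ℝ → ℝ → ℝ) (t w k : ℝ) : ℝ :=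
  ψ k * J (t - k) w (u k) + φ k * J (t - k) w (v k)

lemma gG_cont {ψ φ u v : ℝ → ℝ} {J : ℝ → ℝ → ℝ → ℝ} (hJ : GoodJ J)
    (hψ : Continuous ψ) (hφ : Continuous φ) (hu : Continuous u) (hv : Continuous v)
    (pu : ∀ k, 0 < u k) (pv : ∀ k, 0 < v k)
    {t w : ℝ × ℝ → ℝ} (ht : Continuous t) (hw : Continuous w) (pw : ∀ p, 0 < w p)
    (nu : ∀ p k, w p ≠ u k) (nv : ∀ p k, w p ≠ v k) :
    Continuous (fun p : ℝ × ℝ => gG ψ φ u v J (t p) (w p) p.2) := by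
  have c1 := hJ (fun p => t p - p.2) w (fun p => u p.2) (by fun_prop) hw (by fun_prop) pw
    (fun p => pu _) (fun p => nu _ _)
  have c2 := hJ (fun p => t p - p.2) w (fun p => v p.2) (by fun_prop) hw (by fun_prop) pw
    (fun p => pv _) (fun p => nv _ _)
  unfold gG
  exact ((hψ.comp continuous_snd).mul c1).add ((hφ.comp continuous_snd).mul c2)

lemma main_smooth {b : ℝ} (hb : 1 / 2 ≤ b) {ψ φ u v : ℝ → ℝ}
    (hψ : Continuous ψ) (hφ : Continuous φ) (hu : Continuous u) (hv : Continuous v)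
    (pu : ∀ k, 0 < u k) (pv : ∀ k, 0 < v k) {z0 r : ℝ} (hr : 0 < r) (A : ℝ)
    (hw : ∀ w ∈ Set.Icc (z0 - r) (z0 + r), ∀ k, u k < w ∧ w < v k) (t : ℝ) :
    ContDiff ℝ 1 (fun t => ∫ k in (0 : ℝ)..A, gG ψ φ u v (bK b) t z0 k) ∧
    ContDiffAt ℝ 2 (fun w => ∫ k in (0 : ℝ)..A, gG ψ φ u v (bK b) t w k) z0 ∧
    deriv (fun t => ∫ k in (0 : ℝ)..A, gG ψ φ u v (bK b) t z0 k) t =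
      1 / 2 * deriv (fun w => deriv (fun w => ∫ k in (0 : ℝ)..A, gG ψ φ u v (bK b) t w k) w) z0
      + b / z0 * deriv (fun w => ∫ k in (0 : ℝ)..A, gG ψ φ u v (bK b) t w k) z0 := by
  have pw : ∀ w ∈ Set.Icc (z0 - r) (z0 + r), 0 < w := fun w h => (pu 0).trans (hw w h 0).1
  have hz0 : z0 ∈ Set.Icc (z0 - r) (z0 + r) := ⟨by linarith, by linarith⟩
  have hz0' : z0 ∈ Set.Ioo (z0 - r) (z0 + r) := ⟨by linarith, by linarith⟩
  have nu : ∀ w ∈ Set.Icc (z0 - r) (z0 + r), ∀ k, w ≠ u k := fun w h k => (hw w h k).1.ne'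
  have nv : ∀ w ∈ Set.Icc (z0 - r) (z0 + r), ∀ k, w ≠ v k := fun w h k => (hw w h k).2.ne
  -- continuity in the two settings
  have Cw : ∀ J, GoodJ J → Continuous
      (fun p : ℝ × ℝ => gG ψ φ u v J t (clampR z0 r p.1) p.2) := fun J hJ =>
    gG_cont hJ hψ hφ hu hv pu pv continuous_const ((clampR_cont z0 r).comp continuous_fst)
      (fun p => pw _ (clampR_mem hr _)) (fun p => nu _ (clampR_mem hr _))
      (fun p => nv _ (clampR_mem hr _))
  have Ct : ∀ J, GoodJ J → ∀ t0, Continuous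
      (fun p : ℝ × ℝ => gG ψ φ u v J (clampR t0 1 p.1) z0 p.2) := fun J hJ t0 =>
    gG_cont hJ hψ hφ hu hv pu pv ((clampR_cont t0 1).comp continuous_fst) continuous_const
      (fun p => pw _ hz0) (fun p => nu _ hz0) (fun p => nv _ hz0)
  have Dt : ∀ t0, HasDerivAt (fun t => ∫ k in (0 : ℝ)..A, gG ψ φ u v (bK b) t z0 k)
      (∫ k in (0 : ℝ)..A, gG ψ φ u v (bKs b) t0 z0 k) t0 := by
    intro t0
    refine param_deriv (x0 := t0) (r := 1) (f := fun t k => gG ψ φ u v (bK b) t z0 k)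
      (f' := fun t k => gG ψ φ u v (bKs b) t z0 k) (Ct _ (good_bK hb) t0) (Ct _ (good_bKs hb) t0)
      ?_ t0 ⟨by linarith, by linarith⟩
    intro x _ k
    have d1 := (bK_ds hb (x - k) (pw _ hz0) (pu k) (nu _ hz0 k)).comp_sub_const x k
    have d2 := (bK_ds hb (x - k) (pw _ hz0) (pv k) (nv _ hz0 k)).comp_sub_const x k
    exact (d1.const_mul _).add (d2.const_mul _)
  have Dz : ∀ w ∈ Set.Ioo (z0 - r) (z0 + r),
      HasDerivAt (fun w => ∫ k in (0 : ℝ)..A, gG ψ φ u v (bK b) t w k)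
      (∫ k in (0 : ℝ)..A, gG ψ φ u v (bKz b) t w k) w := by
    refine param_deriv (f := fun w k => gG ψ φ u v (bK b) t w k)
      (f' := fun w k => gG ψ φ u v (bKz b) t w k) (Cw _ (good_bK hb)) (Cw _ (good_bKz hb)) ?_
    intro x _ k
    exact ((bK_dz hb _ _ _).const_mul _).add ((bK_dz hb _ _ _).const_mul _)
  have Dzz : ∀ w ∈ Set.Ioo (z0 - r) (z0 + r),
      HasDerivAt (fun w => ∫ k in (0 : ℝ)..A, gG ψ φ u v (bKz b) t w k)
      (∫ k in (0 : ℝ)..A, gG ψ φ u v (bKzz b) t w k) w := by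
    refine param_deriv (f := fun w k => gG ψ φ u v (bKz b) t w k)
      (f' := fun w k => gG ψ φ u v (bKzz b) t w k) (Cw _ (good_bKz hb)) (Cw _ (good_bKzz hb)) ?_
    intro x _ k
    exact ((bKz_dz hb _ _ _).const_mul _).add ((bKz_dz hb _ _ _).const_mul _)
  have ev : (fun w => deriv (fun w => ∫ k in (0 : ℝ)..A, gG ψ φ u v (bK b) t w k) w)
      =ᶠ[nhds z0] fun w => ∫ k in (0 : ℝ)..A, gG ψ φ u v (bKz b) t w k := by
    filter_upwards [isOpen_Ioo.mem_nhds hz0'] with w hw using (Dz w hw).deriv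
  refine ⟨?_, ?_, ?_⟩
  · rw [contDiff_one_iff_deriv]
    refine ⟨fun t => (Dt t).differentiableAt, ?_⟩
    rw [funext fun t => (Dt t).deriv, continuous_iff_continuousAt]
    intro t0
    exact (param_cont (x0 := t0) (r := 1) (f := fun t k => gG ψ φ u v (bKs b) t z0 k)
      (Ct _ (good_bKs hb) t0)).continuousAt (Icc_mem_nhds (by linarith) (by linarith))
  · have o : IsOpen (Set.Ioo (z0 - r) (z0 + r)) := isOpen_Ioo
    refine ContDiffOn.contDiffAt (s := Set.Ioo (z0 - r) (z0 + r)) ?_ (o.mem_nhds hz0')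
    rw [show (2 : WithTop ℕ∞) = 1 + 1 by norm_num, contDiffOn_succ_iff_deriv_of_isOpen o]
    refine ⟨fun w hw => (Dz w hw).differentiableAt.differentiableWithinAt, by simp, ?_⟩
    refine ContDiffOn.congr ?_ fun w hw => (Dz w hw).deriv
    rw [show (1 : WithTop ℕ∞) = 0 + 1 by norm_num, contDiffOn_succ_iff_deriv_of_isOpen o]
    refine ⟨fun w hw => (Dzz w hw).differentiableAt.differentiableWithinAt, by simp, ?_⟩
    refine ContDiffOn.congr ?_ fun w hw => (Dzz w hw).deriv
    rw [contDiffOn_zero]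
    exact (param_cont (f := fun w k => gG ψ φ u v (bKzz b) t w k)
      (Cw _ (good_bKzz hb))).mono Set.Ioo_subset_Icc_self
  · rw [(Dt t).deriv, ev.deriv_eq, (Dzz z0 hz0').deriv, (Dz z0 hz0').deriv]
    have I : ∀ J, GoodJ J → IntervalIntegrable (fun k => gG ψ φ u v J t z0 k)
        MeasureTheory.volume 0 A := by
      intro J hJ
      have : Continuous (fun k => gG ψ φ u v J t (clampR z0 r z0) k) :=
        (Cw J hJ).comp (by fun_prop : Continuous fun k : ℝ => (z0, k))
      rw [clampR_eq hz0] at this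
      exact this.intervalIntegrable _ _
    rw [← intervalIntegral.integral_const_mul, ← intervalIntegral.integral_const_mul,
      ← intervalIntegral.integral_add ((I _ (good_bKzz hb)).const_mul _)
        ((I _ (good_bKz hb)).const_mul _)]
    congr 1
    funext k
    simp only [gG]
    rw [bK_pde hb _ (pw _ hz0) (pu k), bK_pde hb _ (pw _ hz0) (pv k)]
    ring
end

/-- Continuous extension of a function on `[0,A]` -/
noncomputable def ext0 (A : ℝ) (f : ℝ → ℝ) (k : ℝ) : ℝ := f (max 0 (min k A))

lemma ext0_cont {A : ℝ} (hA : 0 ≤ A) {f : ℝ → ℝ} (hf : ContinuousOn f (Set.Icc 0 A)) :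
    Continuous (ext0 A f) := by
  refine hf.comp_continuous (by fun_prop) fun k => ⟨le_max_left _ _, max_le hA (min_le_right _ _)⟩

lemma ext0_mem {A : ℝ} (hA : 0 ≤ A) (k : ℝ) : max 0 (min k A) ∈ Set.Icc 0 A :=
  ⟨le_max_left _ _, max_le hA (min_le_right _ _)⟩

lemma ext0_eq {A : ℝ} {f : ℝ → ℝ} {k : ℝ} (hk : k ∈ Set.Icc 0 A) : ext0 A f k = f k := by
  unfold ext0
  rw [min_eq_left hk.2, max_eq_right hk.1]

/-- the double-layer Bessel potential attached to the two moving
boundaries `y < h` is well defined (both integrands extend continuously by 0 at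
`k = τ`) and solves the Bessel PDE strictly between the boundaries. -/
theorem double_bessel_potential_solves_pde
    (b T' : ℝ) (hb : 1 / 2 ≤ b) (hT' : 0 < T')
    (y h Ψ Φ : ℝ → ℝ)
    (hy : ContinuousOn y (Set.Icc 0 T')) (hh : ContinuousOn h (Set.Icc 0 T'))
    (hypos : ∀ k ∈ Set.Icc (0 : ℝ) T', 0 < y k)
    (hyh : ∀ k ∈ Set.Icc (0 : ℝ) T', y k < h k)
    (hΨ : ContinuousOn Ψ (Set.Icc 0 T')) (hΦ : ContinuousOn Φ (Set.Icc 0 T'))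
    (q : ℝ → ℝ → ℝ)
    (hq : ∀ τ z, q τ z =
      ∫ k in (0 : ℝ)..τ,
        (Ψ k * deriv (fun ζ => besselKernel b (τ - k) z ζ) (y k)
          + Φ k * deriv (fun ζ => besselKernel b (τ - k) z ζ) (h k)))
    (τ z : ℝ) (hτ : τ ∈ Set.Ioc 0 T')
    (hz : ∀ k ∈ Set.Icc (0 : ℝ) τ, y k < z ∧ z < h k) :
    IntervalIntegrable
      (fun k => Ψ k * deriv (fun ζ => besselKernel b (τ - k) z ζ) (y k)
        + Φ k * deriv (fun ζ => besselKernel b (τ - k) z ζ) (h k))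
      MeasureTheory.volume 0 τ
    ∧ Filter.Tendsto
        (fun k => Ψ k * deriv (fun ζ => besselKernel b (τ - k) z ζ) (y k))
        (nhdsWithin τ (Set.Iio τ)) (nhds 0)
    ∧ Filter.Tendsto
        (fun k => Φ k * deriv (fun ζ => besselKernel b (τ - k) z ζ) (h k))
        (nhdsWithin τ (Set.Iio τ)) (nhds 0)
    ∧ ∀ τ' z' : ℝ, τ' ∈ Set.Ioo 0 T' →
        (∀ k ∈ Set.Icc (0 : ℝ) τ', y k < z' ∧ z' < h k) →
        ContDiffAt ℝ 1 (fun t => q t z') τ' ∧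
        ContDiffAt ℝ 2 (fun w => q τ' w) z' ∧
        deriv (fun t => q t z') τ'
          = 1 / 2 * deriv (fun w => deriv (fun w' => q τ' w') w) z'
            + b / z' * deriv (fun w => q τ' w) z' := by
  -- general facts
  have ext_facts : ∀ A ∈ Set.Ioc 0 T', Continuous (ext0 A Ψ) ∧ Continuous (ext0 A Φ) ∧
      Continuous (ext0 A y) ∧ Continuous (ext0 A h) ∧ (∀ k, 0 < ext0 A y k) ∧
      (∀ k, 0 < ext0 A h k) := by
    intro A hA
    have hs : Set.Icc 0 A ⊆ Set.Icc 0 T' := Set.Icc_subset_Icc_right hA.2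
    refine ⟨ext0_cont hA.1.le (hΨ.mono hs), ext0_cont hA.1.le (hΦ.mono hs),
      ext0_cont hA.1.le (hy.mono hs), ext0_cont hA.1.le (hh.mono hs), fun k => ?_, fun k => ?_⟩
    · exact hypos _ (hs (ext0_mem hA.1.le k))
    · exact (hypos _ (hs (ext0_mem hA.1.le k))).trans (hyh _ (hs (ext0_mem hA.1.le k)))
  have hderiv : ∀ t ∈ Set.Icc 0 T', ∀ w, 0 < w → ∀ k ∈ Set.Icc 0 t,
      deriv (fun ζ => besselKernel b (t - k) w ζ) (y k) = bK b (t - k) w (y k) ∧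
      deriv (fun ζ => besselKernel b (t - k) w ζ) (h k) = bK b (t - k) w (h k) := by
    intro t ht w hw k hk
    have hk' : k ∈ Set.Icc 0 T' := ⟨hk.1, hk.2.trans ht.2⟩
    exact ⟨kernel_deriv hb (by linarith [hk.2]) hw (hypos k hk'),
      kernel_deriv hb (by linarith [hk.2]) hw ((hypos k hk').trans (hyh k hk'))⟩
  have hτ0 : τ ∈ Set.Icc 0 T' := ⟨hτ.1.le, hτ.2⟩
  have hzpos : 0 < z := (hypos 0 ⟨le_rfl, hT'.le⟩).trans (hz 0 ⟨le_rfl, hτ.1.le⟩).1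
  obtain ⟨cΨ, cΦ, cy, ch, py, ph⟩ := ext_facts τ hτ
  have n1 : ∀ k, z ≠ ext0 τ y k := fun k => (hz _ (ext0_mem hτ.1.le k)).1.ne'
  have n2 : ∀ k, z ≠ ext0 τ h k := fun k => (hz _ (ext0_mem hτ.1.le k)).2.ne
  have cont1 : ∀ (ψ u : ℝ → ℝ), Continuous ψ → Continuous u → (∀ k, 0 < u k) → (∀ k, z ≠ u k) →
      Continuous (fun k => ψ k * bK b (τ - k) z (u k)) := by
    intro ψ u hψ hu pu nu
    have c1 := good_bK hb (fun p => τ - p.2) (fun _ => z) (fun p => u p.2) (by fun_prop)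
      (by fun_prop) (by fun_prop) (fun _ => hzpos) (fun _ => pu _) (fun _ => nu _)
    exact hψ.mul (c1.comp (by fun_prop : Continuous fun k : ℝ => ((0 : ℝ), k)))
  have cA := cont1 _ _ cΨ cy py n1
  have cB := cont1 _ _ cΦ ch ph n2
  have hIcc : Set.Icc 0 τ ∈ nhdsWithin τ (Set.Iio τ) := Icc_mem_nhdsLT hτ.1
  refine ⟨?_, ?_, ?_, ?_⟩
  · refine ((cA.add cB).intervalIntegrable 0 τ).congr fun k hk => ?_
    rw [Set.uIoc_of_le hτ.1.le] at hk
    have hk' : k ∈ Set.Icc 0 τ := ⟨hk.1.le, hk.2⟩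
    obtain ⟨e1, e2⟩ := hderiv τ hτ0 z hzpos k hk'
    simp only [Pi.add_apply, e1, e2, ext0_eq hk']
  · have := (cA.tendsto τ).mono_left (nhdsWithin_le_nhds (s := Set.Iio τ))
    simp only [sub_self, bK_nonpos le_rfl, mul_zero] at this
    refine this.congr' ?_
    filter_upwards [hIcc] with k hk
    simp only [(hderiv τ hτ0 z hzpos k hk).1, ext0_eq hk]
  · have := (cB.tendsto τ).mono_left (nhdsWithin_le_nhds (s := Set.Iio τ))
    simp only [sub_self, bK_nonpos le_rfl, mul_zero] at this
    refine this.congr' ?_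
    filter_upwards [hIcc] with k hk
    simp only [(hderiv τ hτ0 z hzpos k hk).2, ext0_eq hk]
  · intro t0 z0 ht0 hz0
    -- extend past t0
    obtain ⟨A, hA1, hA2, hA3⟩ : ∃ A, t0 < A ∧ A ≤ T' ∧ ∀ k ∈ Set.Icc 0 A, y k < z0 ∧ z0 < h k := by
      have nT : Set.Icc 0 T' ∈ nhds t0 := Icc_mem_nhds ht0.1 ht0.2
      have e1 := (hy.continuousAt nT).eventually (gt_mem_nhds (hz0 t0 ⟨ht0.1.le, le_rfl⟩).1)
      have e2 := (hh.continuousAt nT).eventually (lt_mem_nhds (hz0 t0 ⟨ht0.1.le, le_rfl⟩).2)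
      obtain ⟨δ, hδ, hball⟩ := Metric.eventually_nhds_iff.1 (e1.and e2)
      refine ⟨min T' (t0 + δ / 2), lt_min ht0.2 (by linarith), min_le_left _ _, fun k hk => ?_⟩
      rcases le_or_gt k t0 with hkt | hkt
      · exact hz0 k ⟨hk.1, hkt⟩
      · apply hball
        have := hk.2.trans (min_le_right _ _)
        rw [Real.dist_eq, abs_of_pos (by linarith)]
        linarith
    have hA0 : 0 < A := ht0.1.trans hA1
    obtain ⟨cΨ, cΦ, cy, ch, py, ph⟩ := ext_facts A ⟨hA0, hA2⟩
    have hsub : Set.Icc 0 A ⊆ Set.Icc 0 T' := Set.Icc_subset_Icc_right hA2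
    obtain ⟨r, hr, hw⟩ : ∃ r > 0, ∀ w ∈ Set.Icc (z0 - r) (z0 + r), ∀ k,
        ext0 A y k < w ∧ w < ext0 A h k := by
      have ne : (Set.Icc 0 A).Nonempty := ⟨0, le_rfl, hA0.le⟩
      obtain ⟨k1, hk1, m1⟩ := isCompact_Icc.exists_isMaxOn ne (hy.mono hsub)
      obtain ⟨k2, hk2, m2⟩ := isCompact_Icc.exists_isMinOn ne (hh.mono hsub)
      have g1 := (hA3 k1 hk1).1
      have g2 := (hA3 k2 hk2).2
      refine ⟨min ((z0 - y k1) / 2) ((h k2 - z0) / 2), lt_min (by linarith) (by linarith), ?_⟩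
      intro w hw k
      have a1 := min_le_left ((z0 - y k1) / 2) ((h k2 - z0) / 2)
      have a2 := min_le_right ((z0 - y k1) / 2) ((h k2 - z0) / 2)
      have b1 : ext0 A y k ≤ y k1 := m1 (ext0_mem hA0.le k)
      have b2 : h k2 ≤ ext0 A h k := m2 (ext0_mem hA0.le k)
      constructor <;> linarith [hw.1, hw.2]
    have hqeq : ∀ t ∈ Set.Icc 0 A, ∀ w ∈ Set.Icc (z0 - r) (z0 + r), q t w =
        ∫ k in (0 : ℝ)..A, gG (ext0 A Ψ) (ext0 A Φ) (ext0 A y) (ext0 A h) (bK b) t w k := by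
      intro t ht w hwm
      have hw0 : 0 < w := (py 0).trans (hw w hwm 0).1
      have cG : Continuous (fun k => gG (ext0 A Ψ) (ext0 A Φ) (ext0 A y) (ext0 A h) (bK b) t w k) :=
        (gG_cont (good_bK hb) cΨ cΦ cy ch py ph (t := fun _ => t) (w := fun _ => w)
          continuous_const continuous_const (fun _ => hw0) (fun _ k => (hw w hwm k).1.ne')
          (fun _ k => (hw w hwm k).2.ne)).comp (by fun_prop : Continuous fun k : ℝ => ((0 : ℝ), k))
      rw [← intervalIntegral.integral_add_adjacent_intervals (cG.intervalIntegrable 0 t)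
        (cG.intervalIntegrable t A)]
      have z2 : ∫ k in t..A, gG (ext0 A Ψ) (ext0 A Φ) (ext0 A y) (ext0 A h) (bK b) t w k = 0 := by
        apply intervalIntegral.integral_zero_ae
        refine Filter.Eventually.of_forall fun k hk => ?_
        rw [Set.uIoc_of_le ht.2] at hk
        have : t - k ≤ 0 := by linarith [hk.1]
        simp [gG, bK_nonpos this]
      rw [z2, add_zero, hq]
      refine intervalIntegral.integral_congr fun k hk => ?_
      rw [Set.uIcc_of_le ht.1] at hk
      obtain ⟨e1, e2⟩ := hderiv t (hsub ht) w hw0 k hk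
      have hkA : k ∈ Set.Icc 0 A := ⟨hk.1, hk.2.trans ht.2⟩
      simp only [gG, e1, e2, ext0_eq hkA]
    obtain ⟨s1, s2, s3⟩ := main_smooth hb cΨ cΦ cy ch py ph hr A hw t0
    have hz0m : z0 ∈ Set.Icc (z0 - r) (z0 + r) := ⟨by linarith, by linarith⟩
    have E1 : (fun t => q t z0) =ᶠ[nhds t0] fun t =>
        ∫ k in (0 : ℝ)..A, gG (ext0 A Ψ) (ext0 A Φ) (ext0 A y) (ext0 A h) (bK b) t z0 k := by
      filter_upwards [Icc_mem_nhds ht0.1 hA1] with t ht using hqeq t ht z0 hz0m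
    have E2 : (fun w => q t0 w) =ᶠ[nhds z0] fun w =>
        ∫ k in (0 : ℝ)..A, gG (ext0 A Ψ) (ext0 A Φ) (ext0 A y) (ext0 A h) (bK b) t0 w k := by
      filter_upwards [Icc_mem_nhds (show z0 - r < z0 by linarith) (show z0 < z0 + r by linarith)] with w hw using hqeq t0 ⟨ht0.1.le, hA1.le⟩ w hw
    refine ⟨s1.contDiffAt.congr_of_eventuallyEq E1, s2.congr_of_eventuallyEq E2, ?_⟩
    rw [E1.deriv_eq, E2.deriv_eq, E2.deriv.deriv_eq, s3]
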